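/- Let Y_{2r} ⊂ ℙ^{2r+1} be the cubic hypersurface defined by f = x_{r+1}² x₀ + x_{r+2} Q₁(x₀,…,x_{2r+1}) + … + x_{2r+1} Q_r(x₀,…,x_{2r+1}), where Q₁,…,Q_r are homogeneous quadrics. Then every singular point x of Y_{2r} satisfies x_{r+1} = x_{r+2} = … = x_{2r+1} = 0 and Q₁(x) = … = Q_r(x) = 0; conversely every point of ℙ^{2r+1} satisfying these equations is a singular point of Y_{2r}. For general Q₁,…,Q_r this is a finite set of 2^r points. -/

import Mathlib

open MvPolynomial

noncomputable section

/-- An (affine) algebraic subset of `ℂ^ι`: the common zero locus of a set of polynomials. -/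
def IsAlgSet {ι : Type*} (S : Set (ι → ℂ)) : Prop :=
  ∃ T : Set (MvPolynomial ι ℂ), S = {x | ∀ p ∈ T, eval x p = 0}

/-- Irreducibility of a set in the Zariski sense. -/
def AlgIrreducible {ι : Type*} (S : Set (ι → ℂ)) : Prop :=
  S.Nonempty ∧ ∀ A B : Set (ι → ℂ), IsAlgSet A → IsAlgSet B →
    S ⊆ A ∪ B → S ⊆ A ∨ S ⊆ B

/-- Krull dimension of a set, via chains of irreducible algebraic subsets. -/
def algDim {ι : Type*} (S : Set (ι → ℂ)) : WithBot ℕ∞ :=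
  Order.krullDim {T : Set (ι → ℂ) // IsAlgSet T ∧ AlgIrreducible T ∧ T ⊆ S}

/-- A polynomial function on a complex vector space. -/
def IsPolynomialFun {M : Type*} [AddCommGroup M] [Module ℂ M] (g : M → ℂ) : Prop :=
  ∃ (k : ℕ) (l : Fin k → (M →ₗ[ℂ] ℂ)) (p : MvPolynomial (Fin k) ℂ),
    ∀ m, g m = eval (fun i => l i m) p

/-- A Zariski-open subset of a complex vector space: the complement of a common zero
locus of polynomial functions. -/
def IsZariskiOpen {M : Type*} [AddCommGroup M] [Module ℂ M] (U : Set M) : Prop :=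
  ∃ T : Set (M → ℂ), (∀ g ∈ T, IsPolynomialFun g) ∧ Uᶜ = {m | ∀ g ∈ T, g m = 0}

set_option synthInstance.maxHeartbeats 1000000

/-- The cubic form `f = x_{r+1}² x₀ + x_{r+2} Q₁ + … + x_{2r+1} Q_r` on `ℙ^{2r+1}`. -/
def cubicForm (r : ℕ) (Q : Fin r → MvPolynomial (Fin (2 * r + 2)) ℂ) :
    MvPolynomial (Fin (2 * r + 2)) ℂ :=
  X (⟨r + 1, by omega⟩ : Fin (2 * r + 2)) ^ 2 * X (⟨0, by omega⟩ : Fin (2 * r + 2)) +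
    ∑ i : Fin r, X (⟨r + 2 + (i : ℕ), by have := i.isLt; omega⟩ : Fin (2 * r + 2)) * Q i

section PolyFun
variable {V : Type*} [AddCommGroup V] [Module ℂ V]

lemma ipf_const (a : ℂ) : IsPolynomialFun (fun _ : V => a) :=
  ⟨0, Fin.elim0, C a, fun m => by simp⟩

lemma ipf_linear (l : V →ₗ[ℂ] ℂ) : IsPolynomialFun (fun v : V => l v) :=
  ⟨1, fun _ => l, X 0, fun m => by simp⟩

lemma ipf_add {f g : V → ℂ} (hf : IsPolynomialFun f) (hg : IsPolynomialFun g) :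
    IsPolynomialFun (fun v => f v + g v) := by
  obtain ⟨k, l, p, h⟩ := hf
  obtain ⟨k', l', p', h'⟩ := hg
  refine ⟨k + k', Fin.append l l', rename (Fin.castAdd k') p + rename (Fin.natAdd k) p', fun m => ?_⟩
  show f m + g m = _
  rw [h, h', map_add, eval_rename, eval_rename]
  congr 2 <;> (congr 1; ext i; simp)

lemma ipf_mul {f g : V → ℂ} (hf : IsPolynomialFun f) (hg : IsPolynomialFun g) :
    IsPolynomialFun (fun v => f v * g v) := by
  obtain ⟨k, l, p, h⟩ := hf
  obtain ⟨k', l', p', h'⟩ := hg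
  refine ⟨k + k', Fin.append l l', rename (Fin.castAdd k') p * rename (Fin.natAdd k) p', fun m => ?_⟩
  show f m * g m = _
  rw [h, h', map_mul, eval_rename, eval_rename]
  congr 2 <;> (congr 1; ext i; simp)

lemma ipf_sum {ι : Type*} (s : Finset ι) (f : ι → V → ℂ) (hf : ∀ i, IsPolynomialFun (f i)) :
    IsPolynomialFun (fun v => ∑ i ∈ s, f i v) := by
  classical
  induction s using Finset.induction_on with
  | empty => simpa using ipf_const (V := V) 0
  | insert a s ha ih => simpa [Finset.sum_insert ha] using ipf_add (hf a) ih

lemma ipf_prod {ι : Type*} (s : Finset ι) (f : ι → V → ℂ) (hf : ∀ i, IsPolynomialFun (f i)) :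
    IsPolynomialFun (fun v => ∏ i ∈ s, f i v) := by
  classical
  induction s using Finset.induction_on with
  | empty => simpa using ipf_const (V := V) 1
  | insert a s ha ih => simpa [Finset.prod_insert ha] using ipf_mul (hf a) ih

lemma ipf_det {ι : Type*} [Fintype ι] [DecidableEq ι] (f : V → Matrix ι ι ℂ)
    (hf : ∀ i j, IsPolynomialFun (fun v => f v i j)) :
    IsPolynomialFun (fun v => (f v).det) := by
  simp only [Matrix.det_apply']
  exact ipf_sum _ _ fun s => ipf_mul (ipf_const _) (ipf_prod _ _ fun i => hf _ _)

lemma ipf_line {g : V → ℂ} (hg : IsPolynomialFun g) (a b : V) (ha : g a ≠ 0) :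
    {t : ℂ | g (a + t • b) = 0}.Finite := by
  obtain ⟨k, l, p, h⟩ := hg
  let P : Polynomial ℂ := aeval (fun i => Polynomial.C (l i a) + Polynomial.X * Polynomial.C (l i b)) p
  have hP : ∀ t, P.eval t = g (a + t • b) := by
    intro t
    rw [h]
    have : Polynomial.eval t P = (Polynomial.aeval t).comp (aeval (fun i => Polynomial.C (l i a) + Polynomial.X * Polynomial.C (l i b))) p := by
      simp [P]
    rw [this, comp_aeval, aeval_def, ← eval₂_id]
    simp only [map_add, map_smul, smul_eq_mul, map_mul, Polynomial.aeval_X, Polynomial.aeval_C]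
    rfl
  have hne : P ≠ 0 := by
    intro h0
    apply ha
    have := hP 0
    simpa [h0] using this.symm
  refine (P.roots.toFinset.finite_toSet).subset fun t ht => ?_
  simp [hne, Polynomial.IsRoot, hP]
  exact ht
end PolyFun

lemma elim_aux {σ : Type*} {M : Type*} [AddCommMonoid M] (w : σ → M) (D : M)
    (s : Finset (σ →₀ ℕ)) (hs : ∀ γ, γ ∈ s ↔ Finsupp.weight w γ = D)
    (z : σ → ℂ) (P : MvPolynomial σ ℂ) (d : M) (hP : IsWeightedHomogeneous w P d)
    (hz : eval z P = 0) (a : MvPolynomial σ ℂ) :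
    ∑ γ ∈ s, coeff γ (a * P) * eval z (monomial γ 1) = 0 := by
  classical
  induction a using MvPolynomial.induction_on' with
  | monomial m c =>
    have hh : IsWeightedHomogeneous w (monomial m c * P) (Finsupp.weight w m + d) :=
      (isWeightedHomogeneous_monomial w m c rfl).mul hP
    by_cases hD : Finsupp.weight w m + d = D
    · have : eval z (monomial m c * P) = 0 := by simp [hz]
      rw [← this]
      conv_rhs => rw [(monomial m c * P).as_sum, map_sum]
      symm
      have hsub : (monomial m c * P).support ⊆ s := by
        intro γ hγ
        rw [hs, ← hD]
        exact hh (mem_support_iff.1 hγ)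
      rw [Finset.sum_subset hsub]
      · refine Finset.sum_congr rfl fun γ _ => ?_
        simp [eval_monomial]
      · intro γ _ hγ
        rw [notMem_support_iff.1 hγ]; simp
    · refine Finset.sum_eq_zero fun γ hγ => ?_
      rw [hh.coeff_eq_zero, zero_mul]
      rw [(hs γ).1 hγ]; exact fun h => hD h.symm
  | add p q hp hq =>
    simp only [add_mul, coeff_add, Finset.sum_add_distrib, hp, hq, add_zero]

lemma elim_main {V : Type*} [AddCommGroup V] [Module ℂ V] {σ : Type*} {M : Type*} [AddCommMonoid M]
    (w : σ → M) (D : M) (hfin : {γ : σ →₀ ℕ | Finsupp.weight w γ = D}.Finite)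
    {K : Type*} [Fintype K] (c : K → MvPolynomial σ ℂ) (L : K → V →ₗ[ℂ] MvPolynomial σ ℂ)
    (d : K → M) (hhom : ∀ k v, IsWeightedHomogeneous w (c k + L k v) (d k)) (v0 : V)
    (h0 : ∀ γ, Finsupp.weight w γ = D →
      monomial γ (1 : ℂ) ∈ Ideal.span (Set.range fun k => c k + L k v0)) :
    ∃ g : V → ℂ, IsPolynomialFun g ∧ g v0 ≠ 0 ∧ ∀ v, g v ≠ 0 → ∀ z,
      (∀ k, eval z (c k + L k v) = 0) →
        ∀ γ, Finsupp.weight w γ = D → eval z (monomial γ (1 : ℂ)) = 0 := by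
  classical
  let s := hfin.toFinset
  have hs : ∀ γ, γ ∈ s ↔ Finsupp.weight w γ = D := fun γ => by simp [s]
  have h1 : ∀ γ : s, ∃ a : K → MvPolynomial σ ℂ, ∑ k, a k * (c k + L k v0) = monomial γ.1 (1 : ℂ) := by
    intro γ
    exact Ideal.mem_span_range_iff_exists_fun.1 (h0 γ.1 ((hs _).1 γ.2))
  choose a ha using h1
  let A : V → Matrix s s ℂ := fun v γ γ' => coeff γ'.1 (∑ k, a γ k * (c k + L k v))
  refine ⟨fun v => (A v).det, ipf_det A fun γ γ' => ?_, ?_, ?_⟩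
  · have : (fun v => A v γ γ') = fun v => ∑ k, (coeff γ'.1 (a γ k * c k) +
        ((lcoeff ℂ γ'.1) ∘ₗ (LinearMap.mulLeft ℂ (a γ k)) ∘ₗ L k) v) := by
      ext v
      simp [A, mul_add, coeff_sum]
    rw [this]
    exact ipf_sum _ _ fun k => ipf_add (ipf_const _) (ipf_linear _)
  · have : A v0 = 1 := by
      ext γ γ'
      simp only [A, ha, coeff_monomial, Matrix.one_apply, Subtype.ext_iff]
    simp [this]
  · intro v hv z hz γ hγ
    have h2 : (A v).mulVec (fun γ' : s => eval z (monomial γ'.1 (1 : ℂ))) = 0 := by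
      ext γ
      simp only [Matrix.mulVec, dotProduct, A, coeff_sum, Finset.sum_mul, Pi.zero_apply]
      rw [Finset.sum_comm]
      refine Finset.sum_eq_zero fun k _ => ?_
      rw [Finset.sum_coe_sort s (fun γ' => coeff γ' (a γ k * (c k + L k v)) * eval z (monomial γ' (1 : ℂ)))]
      exact elim_aux w D s hs z _ _ (hhom k v) (hz k) _
    have h3 := Matrix.eq_zero_of_mulVec_eq_zero hv h2
    exact congrFun h3 ⟨γ, (hs γ).2 hγ⟩
abbrev VT (r : ℕ) := (Fin (r + 1) ⊕ Unit) ⊕ Fin (r + 1)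

def wt (r : ℕ) : VT r → ℕ × ℕ
  | Sum.inl (Sum.inl _) => (1, 1)
  | Sum.inl (Sum.inr _) => (1, 0)
  | Sum.inr _ => (0, 1)

lemma wt_fst (r : ℕ) (γ : VT r →₀ ℕ) :
    (Finsupp.weight (wt r) γ).1 = ∑ i, γ (Sum.inl i) := by
  rw [Finsupp.weight_eq_sum, Prod.fst_sum]
  simp [Fintype.sum_sum_type, wt]

lemma wt_snd (r : ℕ) (γ : VT r →₀ ℕ) :
    (Finsupp.weight (wt r) γ).2 = ∑ i, γ (Sum.inl (Sum.inl i)) + ∑ i, γ (Sum.inr i) := by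
  rw [Finsupp.weight_eq_sum, Prod.snd_sum]
  simp [Fintype.sum_sum_type, wt]

lemma wt_fin (r : ℕ) (D : ℕ × ℕ) : {γ : VT r →₀ ℕ | Finsupp.weight (wt r) γ = D}.Finite := by
  refine (Finsupp.finite_of_degree_le (σ := VT r) (D.1 + D.2)).subset fun γ hγ => ?_
  have h1 := wt_fst r γ
  have h2 := wt_snd r γ
  simp only [Set.mem_ofPred_eq] at hγ ⊢
  rw [hγ] at h1 h2
  rw [Finsupp.degree_eq_sum, Fintype.sum_sum_type]
  omega

lemma elim_bi (r : ℕ) {V : Type*} [AddCommGroup V] [Module ℂ V]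
    {K : Type*} [Fintype K] (c : K → MvPolynomial (VT r) ℂ) (L : K → V →ₗ[ℂ] MvPolynomial (VT r) ℂ)
    (d : K → ℕ × ℕ) (hhom : ∀ k v, IsWeightedHomogeneous (wt r) (c k + L k v) (d k)) (v0 : V)
    (h0 : ∀ z, (∀ k, eval z (c k + L k v0) = 0) →
      (∀ i, z (Sum.inl i) = 0) ∨ (∀ i, z (Sum.inr i) = 0)) :
    ∃ g : V → ℂ, IsPolynomialFun g ∧ g v0 ≠ 0 ∧ ∀ v, g v ≠ 0 → ∀ z,
      (∀ k, eval z (c k + L k v) = 0) →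
      (∀ i, z (Sum.inl i) = 0) ∨ (∀ i, z (Sum.inr i) = 0) := by
  classical
  let I : Ideal (MvPolynomial (VT r) ℂ) := Ideal.span (Set.range fun k => c k + L k v0)
  let A : Ideal (MvPolynomial (VT r) ℂ) := Ideal.span (Set.range fun i => X (Sum.inl i))
  let B : Ideal (MvPolynomial (VT r) ℂ) := Ideal.span (Set.range fun i => X (Sum.inr i))
  have hAB : A * B ≤ I.radical := by
    rw [← vanishingIdeal_zeroLocus_eq_radical (K := ℂ), Ideal.span_mul_span', Ideal.span_le]
    rintro _ ⟨_, ⟨i, rfl⟩, _, ⟨k, rfl⟩, rfl⟩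
    simp only [SetLike.mem_coe, mem_vanishingIdeal_iff]
    intro z hz
    rw [mem_zeroLocus_iff] at hz
    have := h0 z fun k => hz _ (Ideal.subset_span ⟨k, rfl⟩)
    rcases this with h | h <;> simp [h]
  obtain ⟨N, hN⟩ := Ideal.exists_pow_le_of_le_radical_of_fg hAB (IsNoetherian.noetherian _)
  obtain ⟨g, hg, hg0, hgv⟩ := elim_main (wt r) (N, 2 * N) (wt_fin r _) c L d hhom v0 (by
    intro γ hγ
    apply hN
    have h1 := wt_fst r γ
    have h2 := wt_snd r γ
    rw [hγ] at h1 h2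
    simp only at h1 h2
    rw [mul_pow]
    have hm : monomial γ (1 : ℂ) = (∏ i, X (Sum.inl i) ^ γ (Sum.inl i)) *
        ∏ i, X (Sum.inr i) ^ γ (Sum.inr i) := by
      rw [monomial_eq, Finsupp.prod_fintype _ _ (by simp), Fintype.prod_sum_type]
      simp
    rw [hm]
    refine Ideal.mul_mem_mul ?_ ?_
    · rw [h1, ← Finset.prod_pow_eq_pow_sum]
      exact Ideal.prod_mem_prod fun i _ => Ideal.pow_mem_pow (Ideal.subset_span (Set.mem_range_self i)) _
    · have h3 : N ≤ ∑ i, γ (Sum.inr i) := by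
        rw [Fintype.sum_sum_type] at h1
        omega
      refine Ideal.pow_le_pow_right h3 ?_
      rw [← Finset.prod_pow_eq_pow_sum]
      exact Ideal.prod_mem_prod fun i _ => Ideal.pow_mem_pow (Ideal.subset_span (Set.mem_range_self i)) _)
  refine ⟨g, hg, hg0, fun v hv z hz => ?_⟩
  by_contra hcon
  push Not at hcon
  obtain ⟨⟨i, hi⟩, k, hk⟩ := hcon
  rcases i with j | u
  · have := hgv v hv z hz (Finsupp.single (Sum.inl (Sum.inl j)) N + Finsupp.single (Sum.inr k) N) (by
      rw [map_add, Finsupp.weight_single, Finsupp.weight_single]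
      simp [wt, two_mul])
    rw [← mul_one (1 : ℂ), ← monomial_mul] at this
    rw [map_mul, eval_monomial, eval_monomial, Finsupp.prod_single_index (by simp),
      Finsupp.prod_single_index (by simp)] at this
    simp only [one_mul, mul_eq_zero] at this
    rcases this with h | h
    · exact hi (eq_zero_of_pow_eq_zero h)
    · exact hk (eq_zero_of_pow_eq_zero h)
  · have := hgv v hv z hz (Finsupp.single (Sum.inl (Sum.inr u)) N + Finsupp.single (Sum.inr k) (2 * N)) (by
      rw [map_add, Finsupp.weight_single, Finsupp.weight_single]
      simp [wt])
    rw [← mul_one (1 : ℂ), ← monomial_mul] at this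
    rw [map_mul, eval_monomial, eval_monomial, Finsupp.prod_single_index (by simp),
      Finsupp.prod_single_index (by simp)] at this
    simp only [one_mul, mul_eq_zero] at this
    rcases this with h | h
    · exact hi (eq_zero_of_pow_eq_zero h)
    · exact hk (eq_zero_of_pow_eq_zero h)

def ix (r : ℕ) (j : Fin (r + 1)) : Fin (2 * r + 2) := ⟨j, by omega⟩
def iy (r : ℕ) (j : Fin (r + 1)) : Fin (2 * r + 2) := ⟨r + 1 + j, by omega⟩

def pt (r : ℕ) {R : Type*} (x y : Fin (r + 1) → R) : Fin (2 * r + 2) → R := fun j =>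
  if h : (j : ℕ) < r + 1 then x ⟨j, h⟩ else y ⟨j - (r + 1), by omega⟩

@[simp] lemma pt_ix (r : ℕ) {R : Type*} (x y : Fin (r + 1) → R) (j) : pt r x y (ix r j) = x j := by
  have := j.isLt
  rw [pt, dif_pos (by simp [ix]; omega)]; rfl

@[simp] lemma pt_iy (r : ℕ) {R : Type*} (x y : Fin (r + 1) → R) (j) : pt r x y (iy r j) = y j := by
  rw [pt, dif_neg (by simp [iy]; omega)]; congr 1; ext; simp [iy]

lemma ix_or_iy (r : ℕ) (j : Fin (2 * r + 2)) : (∃ k, j = ix r k) ∨ ∃ k, j = iy r k := by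
  by_cases h : (j : ℕ) < r + 1
  · exact Or.inl ⟨⟨j, h⟩, rfl⟩
  · refine Or.inr ⟨⟨j - (r + 1), by omega⟩, ?_⟩
    ext; simp [iy]; omega

lemma pt_self (r : ℕ) {R : Type*} (x : Fin (2 * r + 2) → R) :
    pt r (fun j => x (ix r j)) (fun j => x (iy r j)) = x := by
  ext j
  rcases ix_or_iy r j with ⟨k, rfl⟩ | ⟨k, rfl⟩ <;> simp

/-- The nondegeneracy condition on the blow-up. -/
def Good (r : ℕ) (Q : Fin r → MvPolynomial (Fin (2 * r + 2)) ℂ) : Prop :=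
  ∀ (x : Fin (r + 1) → ℂ) (s : ℂ) (η : Fin (r + 1) → ℂ),
    (∀ j, (if j = 0 then s * η 0 ^ 2 else 0) +
      ∑ k : Fin r, η k.succ * eval (pt r x (s • η)) (pderiv (ix r j) (Q k)) = 0) →
    (2 * η 0 * x 0 + ∑ k : Fin r, η k.succ * eval (pt r x (s • η)) (pderiv (iy r 0) (Q k)) = 0) →
    (∀ i : Fin r, eval (pt r x (s • η)) (Q i) +
      s * ∑ k : Fin r, η k.succ * eval (pt r x (s • η)) (pderiv (iy r i.succ) (Q k)) = 0) →
    (x = 0 ∧ s = 0) ∨ η = 0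

def xs (r : ℕ) (j : Fin (r + 1)) : MvPolynomial (VT r) ℂ := X (Sum.inl (Sum.inl j))
def ss (r : ℕ) : MvPolynomial (VT r) ℂ := X (Sum.inl (Sum.inr ()))
def ys (r : ℕ) (j : Fin (r + 1)) : MvPolynomial (VT r) ℂ := X (Sum.inr j)

def phi (r : ℕ) : MvPolynomial (Fin (2 * r + 2)) ℂ →ₐ[ℂ] MvPolynomial (VT r) ℂ :=
  aeval (pt r (xs r) (fun k => ss r * ys r k))

lemma xs_hom (r j) : IsWeightedHomogeneous (wt r) (xs r j) (1, 1) := isWeightedHomogeneous_X ℂ (wt r) _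
lemma ss_hom (r) : IsWeightedHomogeneous (wt r) (ss r) (1, 0) := isWeightedHomogeneous_X ℂ (wt r) _
lemma ys_hom (r j) : IsWeightedHomogeneous (wt r) (ys r j) (0, 1) := isWeightedHomogeneous_X ℂ (wt r) _

lemma phi_hom (r n : ℕ) (q : MvPolynomial (Fin (2 * r + 2)) ℂ) (hq : q.IsHomogeneous n) :
    IsWeightedHomogeneous (wt r) (phi r q) (n, n) := by
  rw [q.as_sum, map_sum]
  refine IsWeightedHomogeneous.sum _ _ _ fun m hm => ?_
  have hm' : ∑ i, m i = n := by
    have := hq (mem_support_iff.1 hm)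
    rw [← this, Finsupp.weight_eq_sum]; simp
  rw [phi, aeval_monomial, algebraMap_eq]
  refine IsWeightedHomogeneous.C_mul ?_ _
  rw [Finsupp.prod_fintype _ _ (by simp)]
  have h1 : ((n, n) : ℕ × ℕ) = ∑ i, m i • (1, 1) := by
    rw [← Finset.sum_smul, hm']; simp
  rw [h1]
  refine IsWeightedHomogeneous.prod _ _ _ fun i _ => IsWeightedHomogeneous.pow ?_ _
  rcases ix_or_iy r i with ⟨k, rfl⟩ | ⟨k, rfl⟩
  · simpa using xs_hom r k
  · simpa using (ss_hom r).mul (ys_hom r k)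

def pz {r : ℕ} (z : VT r → ℂ) : Fin (2 * r + 2) → ℂ :=
  pt r (fun j => z (Sum.inl (Sum.inl j))) (z (Sum.inl (Sum.inr ())) • fun j => z (Sum.inr j))

lemma eval_phi (r : ℕ) (z : VT r → ℂ) (q : MvPolynomial (Fin (2 * r + 2)) ℂ) :
    eval z (phi r q) = eval (pz z) q := by
  rw [phi, aeval_def, eval_eval₂, ← eval₂_id, pz]
  congr 1
  · ext; simp
  · ext i
    rcases ix_or_iy r i with ⟨k, rfl⟩ | ⟨k, rfl⟩ <;> simp [xs, ss, ys]

abbrev QV (r : ℕ) := Fin r → homogeneousSubmodule (Fin (2 * r + 2)) ℂ 2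

def GG (r : ℕ) (j : Fin (2 * r + 2)) : QV r →ₗ[ℂ] MvPolynomial (VT r) ℂ where
  toFun Q := ∑ k : Fin r, ys r k.succ * phi r (pderiv j (Q k : MvPolynomial (Fin (2 * r + 2)) ℂ))
  map_add' Q Q' := by simp [mul_add, Finset.sum_add_distrib]
  map_smul' a Q := by simp [Finset.smul_sum]

def FF (r : ℕ) (i : Fin r) : QV r →ₗ[ℂ] MvPolynomial (VT r) ℂ where
  toFun Q := phi r (Q i : MvPolynomial (Fin (2 * r + 2)) ℂ) + ss r * GG r (iy r i.succ) Q
  map_add' Q Q' := by simp [mul_add]; ring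
  map_smul' a Q := by simp

lemma GG_hom (r j Q) : IsWeightedHomogeneous (wt r) (GG r j Q) (1, 2) := by
  refine IsWeightedHomogeneous.sum _ _ _ fun k _ => ?_
  exact (ys_hom r k.succ).mul (phi_hom r 1 _
    (((mem_homogeneousSubmodule 2 _).1 (Q k).2).pderiv (i := j)))

lemma FF_hom (r j Q) : IsWeightedHomogeneous (wt r) (FF r j Q) (2, 2) := by
  refine IsWeightedHomogeneous.add ?_ ?_
  · exact phi_hom r 2 _ ((mem_homogeneousSubmodule 2 _).1 (Q j).2)
  · exact (ss_hom r).mul (GG_hom r _ Q)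

def cK (r : ℕ) : Fin (r + 1) ⊕ Option (Fin r) → MvPolynomial (VT r) ℂ
  | Sum.inl j => if j = 0 then ss r * ys r 0 ^ 2 else 0
  | Sum.inr none => C 2 * ys r 0 * xs r 0
  | Sum.inr (some _) => 0

def LK (r : ℕ) : Fin (r + 1) ⊕ Option (Fin r) → (QV r →ₗ[ℂ] MvPolynomial (VT r) ℂ)
  | Sum.inl j => GG r (ix r j)
  | Sum.inr none => GG r (iy r 0)
  | Sum.inr (some i) => FF r i

def dK (r : ℕ) : Fin (r + 1) ⊕ Option (Fin r) → ℕ × ℕ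
  | Sum.inl _ => (1, 2)
  | Sum.inr none => (1, 2)
  | Sum.inr (some _) => (2, 2)

lemma K_hom (r k Q) : IsWeightedHomogeneous (wt r) (cK r k + LK r k Q) (dK r k) := by
  rcases k with j | _ | i
  · refine IsWeightedHomogeneous.add ?_ (GG_hom r _ Q)
    simp only [cK]
    split_ifs
    · exact (ss_hom r).mul ((ys_hom r 0).pow 2)
    · exact isWeightedHomogeneous_zero _ _ _
  · refine IsWeightedHomogeneous.add ?_ (GG_hom r _ Q)
    exact ((ys_hom r 0).C_mul 2).mul (xs_hom r 0)
  · exact IsWeightedHomogeneous.add (isWeightedHomogeneous_zero _ _ _) (FF_hom r _ Q)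

lemma eval_GG (r j Q) (z : VT r → ℂ) : eval z (GG r j Q) = ∑ k : Fin r, z (Sum.inr k.succ) *
    eval (pz z) (pderiv j (Q k : MvPolynomial (Fin (2 * r + 2)) ℂ)) := by
  simp [GG, eval_phi, ys]

lemma good_iff (r : ℕ) (Q : QV r) :
    Good r (fun i => (Q i : MvPolynomial (Fin (2 * r + 2)) ℂ)) ↔
    ∀ z, (∀ k, eval z (cK r k + LK r k Q) = 0) →
      (∀ i, z (Sum.inl i) = 0) ∨ (∀ i, z (Sum.inr i) = 0) := by
  have key : ∀ z : VT r → ℂ, (∀ k, eval z (cK r k + LK r k Q) = 0) ↔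
      ((∀ j, (if j = 0 then z (Sum.inl (Sum.inr ())) * z (Sum.inr 0) ^ 2 else 0) +
        ∑ k : Fin r, z (Sum.inr k.succ) * eval (pz z) (pderiv (ix r j) (Q k).1) = 0) ∧
      (2 * z (Sum.inr 0) * z (Sum.inl (Sum.inl 0)) +
        ∑ k : Fin r, z (Sum.inr k.succ) * eval (pz z) (pderiv (iy r 0) (Q k).1) = 0) ∧
      (∀ i : Fin r, eval (pz z) (Q i).1 + z (Sum.inl (Sum.inr ())) *
        ∑ k : Fin r, z (Sum.inr k.succ) * eval (pz z) (pderiv (iy r i.succ) (Q k).1) = 0)) := by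
    intro z
    rw [Sum.forall, Option.forall]
    refine and_congr (forall_congr' fun j => ?_) (and_congr ?_ (forall_congr' fun i => ?_))
    · simp only [cK, LK, map_add, eval_GG]
      split_ifs <;> simp [ss, ys]
    · simp only [cK, LK, map_add, eval_GG]
      simp [ys, xs]
    · simp only [cK, LK, FF, LinearMap.coe_mk, AddHom.coe_mk, map_add, map_mul, eval_GG, eval_phi]
      simp [ss]
  constructor
  · intro h z hz
    obtain ⟨h1, h2, h3⟩ := (key z).1 hz
    rcases h (fun j => z (Sum.inl (Sum.inl j))) (z (Sum.inl (Sum.inr ()))) (fun j => z (Sum.inr j))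
      h1 h2 h3 with ⟨ha, hb⟩ | h
    · left
      rintro (j | u)
      · exact congrFun ha j
      · exact hb
    · right
      exact fun i => congrFun h i
  · intro h x s η h1 h2 h3
    rcases h (Sum.elim (Sum.elim x fun _ => s) η) ((key _).2 ⟨h1, h2, h3⟩) with h | h
    · exact Or.inl ⟨funext fun j => h (Sum.inl j), h (Sum.inr ())⟩
    · exact Or.inr (funext h)

lemma good_open (r : ℕ) (Q0 : QV r) (h0 : Good r (fun i => (Q0 i).1)) :
    ∃ g : QV r → ℂ, IsPolynomialFun g ∧ g Q0 ≠ 0 ∧ ∀ Q, g Q ≠ 0 → Good r (fun i => (Q i).1) := by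
  obtain ⟨g, h1, h2, h3⟩ := elim_bi r (cK r) (LK r) (dK r) (K_hom r) Q0 ((good_iff r Q0).1 h0)
  exact ⟨g, h1, h2, fun Q hQ => (good_iff r Q).2 (h3 Q hQ)⟩
open Topology Filter in
lemma topo_local {E : Type*} [NormedAddCommGroup E] [NormedSpace ℂ E] [FiniteDimensional ℂ E]
    (q : ℂ × E → E) (hq : Continuous q) (t0 : ℂ)
    (h1 : ∀ u, q (t0, u) = 0 → ∃ f' : (ℂ × E) ≃L[ℂ] (ℂ × E),
      HasStrictFDerivAt (fun p : ℂ × E => (p.1, q p)) (f' : (ℂ × E) →L[ℂ] (ℂ × E)) (t0, u))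
    (h2 : ∃ R : ℝ, ∀ᶠ t in 𝓝 t0, ∀ u, q (t, u) = 0 → ‖u‖ ≤ R) :
    {u | q (t0, u) = 0}.Finite ∧
      ∀ᶠ t in 𝓝 t0, {u | q (t, u) = 0}.ncard = {u | q (t0, u) = 0}.ncard := by
  classical
  have : ProperSpace E := FiniteDimensional.proper ℂ E
  have : CompleteSpace E := FiniteDimensional.complete ℂ E
  obtain ⟨R, hR⟩ := h2
  -- local homeomorphisms
  have hloc : ∀ u, q (t0, u) = 0 → ∃ e : OpenPartialHomeomorph (ℂ × E) (ℂ × E),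
      (t0, u) ∈ e.source ∧ ∀ p, e p = (p.1, q p) := by
    intro u hu
    obtain ⟨f', hf'⟩ := h1 u hu
    exact ⟨hf'.toOpenPartialHomeomorph _, hf'.mem_toOpenPartialHomeomorph_source, fun p => rfl⟩
  set Z : Set E := {u | q (t0, u) = 0} with hZ
  have hZc : IsClosed Z := isClosed_eq (by fun_prop) continuous_const
  have hZcomp : IsCompact Z := by
    refine (isCompact_closedBall (0 : E) R).of_isClosed_subset hZc fun u hu => ?_
    simpa using hR.self_of_nhds u hu
  have hfin : Z.Finite := by
    refine hZcomp.finite ?_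
    rw [isDiscrete_iff_forall_mem_exists_isOpen]
    intro u hu
    obtain ⟨e, heu, he⟩ := hloc u hu
    refine ⟨(fun v => (t0, v)) ⁻¹' e.source, e.open_source.preimage (by fun_prop), ?_⟩
    ext v
    simp only [Set.mem_inter_iff, Set.mem_preimage, Set.mem_singleton_iff]
    constructor
    · rintro ⟨hv, hvZ⟩
      have hv' : q (t0, v) = 0 := hvZ
      have hu' : q (t0, u) = 0 := hu
      have := e.injOn hv heu (by rw [he, he, hu', hv'])
      simpa using this
    · rintro rfl
      exact ⟨heu, hu⟩
  refine ⟨hfin, ?_⟩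
  obtain ⟨W, hW, hdisj⟩ := hfin.t2_separation
  have : Nonempty (OpenPartialHomeomorph (ℂ × E) (ℂ × E)) := ⟨OpenPartialHomeomorph.refl _⟩
  choose! e heu he using hloc
  -- neighbourhoods
  let N : E → Set (ℂ × E) := fun u => (e u).source ∩ (Prod.snd ⁻¹' W u)
  have hNo : ∀ u, IsOpen (N u) := fun u => (e u).open_source.inter ((hW u).2.preimage continuous_snd)
  have hNu : ∀ u ∈ Z, (t0, u) ∈ N u := fun u hu => ⟨heu u hu, (hW u).1⟩
  have hex : ∀ u ∈ Z, ∀ᶠ t in 𝓝 t0, ∃ v, (t, v) ∈ N u ∧ q (t, v) = 0 := by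
    intro u hu
    have hop : IsOpen ((e u) '' N u) :=
      (e u).isOpen_image_of_subset_source (hNo u) Set.inter_subset_left
    have hmem : (t0, (0 : E)) ∈ (e u) '' N u := by
      refine ⟨(t0, u), hNu u hu, ?_⟩
      rw [he u hu]
      have : q (t0, u) = 0 := hu
      simp [this]
    have : ∀ᶠ t in 𝓝 t0, (t, (0 : E)) ∈ (e u) '' N u :=
      (Continuous.prodMk_left (0 : E)).continuousAt.eventually (hop.mem_nhds hmem)
    filter_upwards [this] with t ht
    obtain ⟨⟨t', v⟩, hv, hev⟩ := ht
    rw [he u hu] at hev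
    simp only [Prod.mk.injEq] at hev
    obtain ⟨rfl, h⟩ := hev
    exact ⟨v, hv, h⟩
  have hcov : ∀ᶠ t in 𝓝 t0, ∀ v ∈ Metric.closedBall (0 : E) R,
      q (t, v) ≠ 0 ∨ (t, v) ∈ ⋃ u ∈ Z, N u := by
    refine (isCompact_closedBall (0 : E) R).eventually_forall_of_forall_eventually fun v _ => ?_
    have hopen : IsOpen ({p : ℂ × E | q p ≠ 0} ∪ ⋃ u ∈ Z, N u) :=
      (isOpen_ne_fun hq continuous_const).union (isOpen_biUnion fun u _ => hNo u)
    refine hopen.mem_nhds ?_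
    by_cases hv : q (t0, v) = 0
    · exact Or.inr (Set.mem_biUnion (show v ∈ Z from hv) (hNu v hv))
    · exact Or.inl hv
  have hex' : ∀ᶠ t in 𝓝 t0, ∀ u ∈ Z, ∃ v, (t, v) ∈ N u ∧ q (t, v) = 0 :=
    (Filter.eventually_all_finite hfin).2 hex
  filter_upwards [hR, hcov, hex'] with t htR htcov htex
  choose! ψ hψ using htex
  have himg : {u | q (t, u) = 0} = ψ '' Z := by
    ext v
    constructor
    · intro hv
      have hv' : q (t, v) = 0 := hv
      have hb : v ∈ Metric.closedBall (0 : E) R := by simpa using htR v hv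
      rcases htcov v hb with h | h
      · exact absurd hv' h
      · obtain ⟨u, hu, hvu⟩ := Set.mem_iUnion₂.1 h
        refine ⟨u, hu, ?_⟩
        have := (e u).injOn (hψ u hu).1.1 hvu.1 (by rw [he u hu, he u hu, (hψ u hu).2, hv'])
        simpa using this
    · rintro ⟨u, hu, rfl⟩
      exact (hψ u hu).2
  rw [himg]
  refine Set.InjOn.ncard_image fun u hu u' hu' huu => ?_
  by_contra hne
  have hd := hdisj hu hu' hne
  have hx : ψ u ∈ W u := (hψ u hu).1.2
  have hx' : ψ u' ∈ W u' := (hψ u' hu').1.2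
  rw [← huu] at hx'
  exact (Set.disjoint_left.1 hd) hx hx'

open Topology Filter in
lemma topo_const {E : Type*} [NormedAddCommGroup E] [NormedSpace ℂ E] [FiniteDimensional ℂ E]
    (q : ℂ × E → E) (hq : Continuous q) (T : Set ℂ) (hT : IsPreconnected T) 
    (h1 : ∀ t ∈ T, ∀ u, q (t, u) = 0 → ∃ f' : (ℂ × E) ≃L[ℂ] (ℂ × E),
      HasStrictFDerivAt (fun p : ℂ × E => (p.1, q p)) (f' : (ℂ × E) →L[ℂ] (ℂ × E)) (t, u))
    (h2 : ∀ t0 ∈ T, ∃ R : ℝ, ∀ᶠ t in 𝓝 t0, ∀ u, q (t, u) = 0 → ‖u‖ ≤ R)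
    (a b : ℂ) (ha : a ∈ T) (hb : b ∈ T) :
    {u | q (b, u) = 0}.Finite ∧ {u | q (a, u) = 0}.ncard = {u | q (b, u) = 0}.ncard := by
  have hl := fun t ht => topo_local q hq t (h1 t ht) (h2 t ht)
  refine ⟨(hl b hb).1, ?_⟩
  refine hT.constant (f := fun t => {u | q (t, u) = 0}.ncard) ?_ ha hb
  intro t ht
  refine ContinuousAt.continuousWithinAt ?_
  refine continuousAt_const.congr (f := fun _ => {u | q (t, u) = 0}.ncard) ?_
  filter_upwards [(hl t ht).2] with t' ht' using ht'.symm
@[simp] lemma ix_inj (r : ℕ) (j k) : ix r j = ix r k ↔ j = k := by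
  simp [ix, Fin.ext_iff]
@[simp] lemma iy_inj (r : ℕ) (j k) : iy r j = iy r k ↔ j = k := by
  simp [iy, Fin.ext_iff]
@[simp] lemma ix_ne_iy (r : ℕ) (j k) : ix r j = iy r k ↔ False := by
  simp [ix, iy, Fin.ext_iff]; omega
@[simp] lemma iy_ne_ix (r : ℕ) (j k) : iy r j = ix r k ↔ False := by
  simp [ix, iy, Fin.ext_iff]; omega

lemma cubic_eq (r : ℕ) (Q : Fin r → MvPolynomial (Fin (2 * r + 2)) ℂ) :
    cubicForm r Q = X (iy r 0) ^ 2 * X (ix r 0) + ∑ i : Fin r, X (iy r i.succ) * Q i := by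
  rw [cubicForm]
  congr 1
  refine Finset.sum_congr rfl fun i _ => ?_
  congr 2
  ext; simp [iy]; omega

lemma cubic_ix (r : ℕ) (Q : Fin r → MvPolynomial (Fin (2 * r + 2)) ℂ) (x) (j) :
    eval x (pderiv (ix r j) (cubicForm r Q)) = (if j = 0 then x (iy r 0) ^ 2 else 0) +
      ∑ k : Fin r, x (iy r k.succ) * eval x (pderiv (ix r j) (Q k)) := by
  classical
  rw [cubic_eq]
  simp [pderiv_X, Pi.single_apply, Derivation.leibniz, eq_comm (a := (0 : Fin (r+1))), apply_ite (eval x)]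

lemma cubic_iy0 (r : ℕ) (Q : Fin r → MvPolynomial (Fin (2 * r + 2)) ℂ) (x) :
    eval x (pderiv (iy r 0) (cubicForm r Q)) = 2 * x (iy r 0) * x (ix r 0) +
      ∑ k : Fin r, x (iy r k.succ) * eval x (pderiv (iy r 0) (Q k)) := by
  classical
  rw [cubic_eq]
  simp [pderiv_X, Pi.single_apply, Derivation.leibniz]
  ring

lemma cubic_iy (r : ℕ) (Q : Fin r → MvPolynomial (Fin (2 * r + 2)) ℂ) (x) (i : Fin r) :
    eval x (pderiv (iy r i.succ) (cubicForm r Q)) = eval x (Q i) +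
      ∑ k : Fin r, x (iy r k.succ) * eval x (pderiv (iy r i.succ) (Q k)) := by
  classical
  rw [cubic_eq]
  simp [pderiv_X, Pi.single_apply, Derivation.leibniz, Finset.sum_add_distrib, eq_comm (a := (0 : Fin (r+1)))]
  ring

lemma part_one (r : ℕ) (Q : Fin r → MvPolynomial (Fin (2 * r + 2)) ℂ) (x : Fin (2 * r + 2) → ℂ)
    (hx : ∀ j : Fin (2 * r + 2), r + 1 ≤ (j : ℕ) → x j = 0) (hQ : ∀ i, eval x (Q i) = 0) (j) :
    eval x (pderiv j (cubicForm r Q)) = 0 := by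
  have hy : ∀ k, x (iy r k) = 0 := fun k => hx _ (by simp [iy])
  rcases ix_or_iy r j with ⟨k, rfl⟩ | ⟨k, rfl⟩
  · simp [cubic_ix, hy]
  · refine Fin.cases ?_ (fun i => ?_) k
    · simp [cubic_iy0, hy]
    · simp [cubic_iy, hy, hQ]

lemma part_two (r : ℕ) (Q : Fin r → MvPolynomial (Fin (2 * r + 2)) ℂ) (hG : Good r Q)
    (x : Fin (2 * r + 2) → ℂ) (h : ∀ j, eval x (pderiv j (cubicForm r Q)) = 0) :
    (∀ j : Fin (2 * r + 2), r + 1 ≤ (j : ℕ) → x j = 0) ∧ ∀ i, eval x (Q i) = 0 := by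
  have hy : (fun j => x (iy r j)) = 0 := by
    have := hG (fun j => x (ix r j)) 1 (fun j => x (iy r j))
    simp only [one_smul, one_mul, pt_self, one_ne_zero, and_false, false_or] at this
    refine this (fun j => ?_) ?_ fun i => ?_
    · rw [← cubic_ix]; exact h _
    · rw [← cubic_iy0]; exact h _
    · rw [← cubic_iy]; exact h _
  have hy' : ∀ k, x (iy r k) = 0 := fun k => congrFun hy k
  constructor
  · intro j hj
    rcases ix_or_iy r j with ⟨k, rfl⟩ | ⟨k, rfl⟩
    · simp [ix] at hj; omega
    · exact hy' k
  · intro i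
    have := h (iy r i.succ)
    simpa [cubic_iy, hy'] using this

lemma signed_pow (r : ℕ) (e : Fin r → ℤ) (he : ∀ i, e i = 0 ∨ e i = 1 ∨ e i = -1)
    (h : ∑ i, e i * 2 ^ (i : ℕ) = 0) : ∀ i, e i = 0 := by
  induction r with
  | zero => exact fun i => i.elim0
  | succ r ih =>
    rw [Fin.sum_univ_succ] at h
    have h2 : ∑ i : Fin r, e i.succ * 2 ^ ((i.succ : Fin (r + 1)) : ℕ) =
        2 * ∑ i : Fin r, e i.succ * 2 ^ (i : ℕ) := by
      rw [Finset.mul_sum]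
      refine Finset.sum_congr rfl fun i _ => ?_
      simp [pow_succ]; ring
    rw [h2] at h
    simp only [Fin.val_zero, pow_zero, mul_one] at h
    have h0 : e 0 = 0 := by rcases he 0 with h' | h' | h' <;> omega
    have := ih (fun i => e i.succ) (fun i => he _) (by omega)
    exact fun i => Fin.cases h0 this i

def Qz (r : ℕ) (i : Fin r) : MvPolynomial (Fin (2 * r + 2)) ℂ :=
  X (ix r i.succ) ^ 2 - X (ix r 0) ^ 2 + C ((1 / 4) ^ (i : ℕ) / 3) * X (iy r i.succ) ^ 2

lemma Qz_hom (r i) : (Qz r i).IsHomogeneous 2 := by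
  refine ((isHomogeneous_X_pow _ 2).sub (isHomogeneous_X_pow _ 2)).add ?_
  simpa using (isHomogeneous_C _ ((1 / 4) ^ (i : ℕ) / 3 : ℂ)).mul (isHomogeneous_X_pow (iy r i.succ) 2)

def Q00 (r : ℕ) : QV r := fun i => ⟨Qz r i, (mem_homogeneousSubmodule 2 _).2 (Qz_hom r i)⟩

lemma Qz_good (r : ℕ) : Good r (Qz r) := by
  classical
  intro x s η h1 h2 h3
  have e0 : s * η 0 ^ 2 - 2 * x 0 * ∑ k : Fin r, η k.succ = 0 := by
    rw [← h1 0, Finset.mul_sum, sub_eq_add_neg, ← Finset.sum_neg_distrib]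
    simp only [if_true]
    congr 1
    refine Finset.sum_congr rfl fun k _ => ?_
    simp [Qz, pderiv_X, Pi.single_apply, Derivation.leibniz]
    ring
  have e1 : ∀ i : Fin r, η i.succ * x i.succ = 0 := by
    intro i
    have := h1 i.succ
    simp [Qz, pderiv_X, Pi.single_apply, Derivation.leibniz, eq_comm (a := (0 : Fin (r+1))),
      apply_ite (eval (pt r x (s • η)))] at this
    simpa using this
  have e2 : η 0 * x 0 = 0 := by
    have := h2
    simp [Qz, pderiv_X, Pi.single_apply, Derivation.leibniz] at this
    simpa using this
  have e3 : ∀ i : Fin r, x i.succ ^ 2 - x 0 ^ 2 + (1 / 4) ^ (i : ℕ) * (s * η i.succ) ^ 2 = 0 := by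
    intro i
    rw [← h3 i]
    simp [Qz, pderiv_X, Pi.single_apply, Derivation.leibniz, apply_ite (eval (pt r x (s • η)))]
    ring
  have h4 : ∀ i : ℕ, ((1 / 4 : ℂ)) ^ i ≠ 0 := fun i => pow_ne_zero _ (by norm_num)
  by_cases hx0 : x 0 = 0
  · have hx : ∀ i : Fin r, x i.succ = 0 := by
      intro i
      rcases mul_eq_zero.1 (e1 i) with h | h
      · have := e3 i
        simpa [h, hx0] using this
      · exact h
    have hx' : x = 0 := by
      ext i
      exact Fin.cases hx0 hx i
    by_cases hs : s = 0
    · exact Or.inl ⟨hx', hs⟩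
    · right
      ext i
      refine Fin.cases ?_ (fun i => ?_) i
      · simpa [hx0, hs] using e0
      · simpa [hx0, hx, hs] using e3 i
  · right
    have hη0 : η 0 = 0 := by simpa [hx0] using e2
    have hsum : ∑ k : Fin r, η k.succ = 0 := by simpa [hη0, hx0] using e0
    have hc : ∀ i : Fin r, ∃ e : ℤ, (e = 0 ∨ e = 1 ∨ e = -1) ∧ s * η i.succ = e * 2 ^ (i : ℕ) * x 0 ∧
        (e = 0 → η i.succ = 0) := by
      intro i
      rcases mul_eq_zero.1 (e1 i) with h | h
      · exact ⟨0, by simp, by simp [h], fun _ => h⟩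
      · have h5 := e3 i
        rw [h] at h5
        have h6 : (s * η i.succ) ^ 2 = (2 ^ (i : ℕ) * x 0) ^ 2 := by
          have h7 : (1 / 4 : ℂ) ^ (i : ℕ) * 4 ^ (i : ℕ) = 1 := by
            rw [← mul_pow]; norm_num
          have h8 : (2 ^ (i : ℕ) : ℂ) ^ 2 = 4 ^ (i : ℕ) := by
            rw [← pow_mul, mul_comm, pow_mul]; norm_num
          rw [mul_pow (2 ^ (i : ℕ)), h8]
          linear_combination (4 : ℂ) ^ (i : ℕ) * h5 - (s * η i.succ) ^ 2 * h7
        rcases sq_eq_sq_iff_eq_or_eq_neg.1 h6 with h7 | h7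
        · exact ⟨1, by simp, by simpa using h7, by simp⟩
        · exact ⟨-1, by simp, by simpa using h7, by simp⟩
    choose e he hse hez using hc
    have : ∑ i : Fin r, e i * 2 ^ (i : ℕ) = 0 := by
      have h9 : (∑ i : Fin r, (e i : ℂ) * 2 ^ (i : ℕ)) * x 0 = 0 := by
        rw [Finset.sum_mul, ← Finset.sum_congr rfl fun i _ => hse i, ← Finset.mul_sum, hsum, mul_zero]
      have h10 := (mul_eq_zero.1 h9).resolve_right hx0
      exact_mod_cast h10
    have := signed_pow r e he this
    ext i
    exact Fin.cases hη0 (fun i => hez i (this i)) i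
lemma sum_split (r : ℕ) (f : Fin (2 * r + 2) → ℂ) :
    ∑ j, f j = ∑ j, f (ix r j) + ∑ j, f (iy r j) := by
  have hb : Function.Bijective (Sum.elim (ix r) (iy r)) := by
    constructor
    · rintro (a | a) (b | b) h <;> simp_all
    · intro j
      rcases ix_or_iy r j with ⟨k, rfl⟩ | ⟨k, rfl⟩
      · exact ⟨Sum.inl k, rfl⟩
      · exact ⟨Sum.inr k, rfl⟩
  rw [← Fintype.sum_bijective _ hb (fun s => f (Sum.elim (ix r) (iy r) s)) f (fun _ => rfl),
    Fintype.sum_sum_type]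
  rfl

lemma eval_smul_hom {σ : Type*} (p : MvPolynomial σ ℂ) (hp : p.IsHomogeneous 2) (c : ℂ)
    (x : σ → ℂ) : eval (c • x) p = c ^ 2 * eval x p := by
  classical
  rw [eval_eq, eval_eq, Finset.mul_sum]
  refine Finset.sum_congr rfl fun d hd => ?_
  have h2 := hp (mem_support_iff.1 hd)
  have h3 : ∑ i ∈ d.support, d i = 2 := by
    rw [← h2, Finsupp.weight_apply, Finsupp.sum]
    simp
  simp only [Pi.smul_apply, smul_eq_mul, mul_pow, Finset.prod_mul_distrib]
  rw [Finset.prod_pow_eq_pow_sum, h3]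
  ring

lemma pt_smul (r : ℕ) (c : ℂ) (x : Fin (r + 1) → ℂ) : c • pt r x 0 = pt r (c • x) 0 := by
  ext j
  rcases ix_or_iy r j with ⟨k, rfl⟩ | ⟨k, rfl⟩ <;> simp

lemma good_x0 (r : ℕ) (Q : Fin r → MvPolynomial (Fin (2 * r + 2)) ℂ) (hG : Good r Q)
    (x : Fin (r + 1) → ℂ) (hx : x ≠ 0) (h : ∀ i, eval (pt r x 0) (Q i) = 0) : x 0 ≠ 0 := by
  intro h0
  have := hG x 0 (Fin.cons 1 0)
  simp [h0, h, hx] at this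
  simpa using congrFun this 0

lemma good_inj (r : ℕ) (Q : Fin r → MvPolynomial (Fin (2 * r + 2)) ℂ) (hG : Good r Q)
    (x : Fin (r + 1) → ℂ) (hx : x ≠ 0) (h : ∀ i, eval (pt r x 0) (Q i) = 0)
    (η : Fin r → ℂ) (hη : ∀ j, ∑ k, η k * eval (pt r x 0) (pderiv (ix r j) (Q k)) = 0) :
    η = 0 := by
  have h0 := good_x0 r Q hG x hx h
  have := hG x 0 (Fin.cons (-(∑ k, η k * eval (pt r x 0) (pderiv (iy r 0) (Q k))) / (2 * x 0)) η)
  simp only [zero_smul, zero_mul, Fin.cons_succ, Fin.cons_zero, hη, h, ite_self, add_zero, hx,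
    false_and, false_or, forall_const] at this
  have h1 := this (by field_simp; ring)
  ext k
  simpa using congrFun h1 k.succ

lemma good_det (r : ℕ) (Q : Fin r → MvPolynomial (Fin (2 * r + 2)) ℂ) (hG : Good r Q)
    (hQ : ∀ i, (Q i).IsHomogeneous 2)
    (x : Fin (r + 1) → ℂ) (hx : x ≠ 0) (h : ∀ i, eval (pt r x 0) (Q i) = 0)
    (v : Fin r → ℂ) (hv : ∀ k, ∑ j : Fin r, eval (pt r x 0) (pderiv (ix r j.succ) (Q k)) * v j = 0) :
    v = 0 := by
  have h0 := good_x0 r Q hG x hx h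
  let M : Matrix (Fin r) (Fin r) ℂ := fun k j => eval (pt r x 0) (pderiv (ix r j.succ) (Q k))
  have hM : M.det ≠ 0 := by
    intro hd
    obtain ⟨η, hη0, hη⟩ := Matrix.exists_vecMul_eq_zero_iff.2 hd
    apply hη0
    apply good_inj r Q hG x hx h
    have hs : ∀ j : Fin r, ∑ k, η k * eval (pt r x 0) (pderiv (ix r j.succ) (Q k)) = 0 := by
      intro j
      simpa [Matrix.vecMul, dotProduct, M] using congrFun hη j
    have he : ∀ k, ∑ j, x j * eval (pt r x 0) (pderiv (ix r j) (Q k)) = 0 := by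
      intro k
      have := congrArg (eval (pt r x 0)) (hQ k).sum_X_mul_pderiv
      rw [map_sum, sum_split] at this
      simpa [h] using this
    intro j
    refine Fin.cases ?_ hs j
    have hh : ∑ k, η k * ∑ j, x j * eval (pt r x 0) (pderiv (ix r j) (Q k)) = 0 := by
      simp [he]
    simp only [Fin.sum_univ_succ, mul_add, Finset.sum_add_distrib, Finset.mul_sum] at hh
    rw [Finset.sum_comm] at hh
    have hz : ∑ j : Fin r, ∑ k, η k * (x j.succ * eval (pt r x 0) (pderiv (ix r j.succ) (Q k))) = 0 := by
      refine Finset.sum_eq_zero fun j _ => ?_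
      rw [← mul_zero (x j.succ), ← hs j, Finset.mul_sum]
      exact Finset.sum_congr rfl fun k _ => by ring
    have hw : x 0 * ∑ k, η k * eval (pt r x 0) (pderiv (ix r 0) (Q k)) = 0 := by
      rw [hz, add_zero] at hh
      rw [Finset.mul_sum, ← hh]
      exact Finset.sum_congr rfl fun k _ => by ring
    exact (mul_eq_zero.1 hw).resolve_left h0
  exact Matrix.eq_zero_of_mulVec_eq_zero hM (by ext k; simpa [Matrix.mulVec, dotProduct, M] using hv k)

lemma hsfd_eval {n : ℕ} (p : MvPolynomial (Fin n) ℂ) (x : Fin n → ℂ) :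
    HasStrictFDerivAt (fun x => eval x p)
      (∑ j, eval x (pderiv j p) • ContinuousLinearMap.proj (R := ℂ) (φ := fun _ : Fin n => ℂ) j) x := by
  classical
  induction p using MvPolynomial.induction_on with
  | C a =>
    simp only [eval_C]
    refine (hasStrictFDerivAt_const (𝕜 := ℂ) a x).congr_fderiv ?_
    ext v
    simp
  | add p q hp hq =>
    simp only [map_add]
    refine (hp.add hq).congr_fderiv ?_
    ext v
    simp [add_mul, Finset.sum_add_distrib]
  | mul_X p i hp =>
    have h1 : HasStrictFDerivAt (fun x : Fin n → ℂ => x i)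
      (ContinuousLinearMap.proj (R := ℂ) (φ := fun _ : Fin n => ℂ) i) x :=
      (ContinuousLinearMap.proj (R := ℂ) (φ := fun _ : Fin n => ℂ) i).hasStrictFDerivAt
    have h2 := hp.mul h1
    simp only [map_mul, eval_X]
    refine h2.congr_fderiv ?_
    ext v
    simp [Derivation.leibniz, pderiv_X, Pi.single_apply, Finset.mul_sum, add_mul,
      Finset.sum_add_distrib, apply_ite (eval x), mul_assoc]

def aL (r : ℕ) : (Fin r → ℂ) →L[ℂ] (Fin (2 * r + 2) → ℂ) :=
  LinearMap.toContinuousLinearMap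
    { toFun := fun u => pt r (Fin.cons 0 u) 0
      map_add' := fun u v => by
        ext j
        rcases ix_or_iy r j with ⟨k, rfl⟩ | ⟨k, rfl⟩
        · refine Fin.cases ?_ (fun i => ?_) k <;> simp
        · simp
      map_smul' := fun c v => by
        ext j
        rcases ix_or_iy r j with ⟨k, rfl⟩ | ⟨k, rfl⟩
        · refine Fin.cases ?_ (fun i => ?_) k <;> simp
        · simp }

def af (r : ℕ) (u : Fin r → ℂ) : Fin (2 * r + 2) → ℂ := pt r (Fin.cons 1 u) 0

lemma af_eq (r : ℕ) (u) : af r u = aL r u + af r 0 := by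
  ext j
  rcases ix_or_iy r j with ⟨k, rfl⟩ | ⟨k, rfl⟩
  · refine Fin.cases ?_ (fun i => ?_) k <;> simp [af, aL]
  · simp [af, aL]

lemma af_deriv (r : ℕ) (u) : HasStrictFDerivAt (af r) (aL r) u := by
  have : af r = fun u => aL r u + af r 0 := funext (af_eq r)
  rw [this]
  exact (aL r).hasStrictFDerivAt.add_const _

lemma cons_ne (r : ℕ) (u : Fin r → ℂ) : (Fin.cons 1 u : Fin (r + 1) → ℂ) ≠ 0 := fun h => by
  simpa using congrFun h 0

lemma ev_deriv (r : ℕ) (p : MvPolynomial (Fin (2 * r + 2)) ℂ) (u : Fin r → ℂ) :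
    HasStrictFDerivAt (fun u => eval (af r u) p)
      (∑ j : Fin r, eval (af r u) (pderiv (ix r j.succ) p) •
        ContinuousLinearMap.proj (R := ℂ) (φ := fun _ : Fin r => ℂ) j) u := by
  refine ((hsfd_eval p (af r u)).comp u (af_deriv r u)).congr_fderiv ?_
  ext v
  have : ∀ v, aL r v = pt r (Fin.cons 0 v) 0 := fun v => rfl
  simp only [ContinuousLinearMap.comp_apply, _root_.sum_apply,
    _root_.smul_apply, ContinuousLinearMap.proj_apply, this]
  rw [sum_split, Fin.sum_univ_succ]
  simp

def qq (r : ℕ) (A B : QV r) (p : ℂ × (Fin r → ℂ)) : Fin r → ℂ := fun i =>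
  eval (af r p.2) (A i).1 + p.1 * eval (af r p.2) (B i).1

lemma qq_eq (r : ℕ) (A B : QV r) (t u i) : qq r A B (t, u) i = eval (af r u) ((A + t • B) i).1 := by
  simp [qq]

lemma qq_deriv (r : ℕ) (A B : QV r) (t : ℂ) (u : Fin r → ℂ) (h : qq r A B (t, u) = 0)
    (hG : Good r (fun i => ((A + t • B) i).1)) :
    ∃ f' : (ℂ × (Fin r → ℂ)) ≃L[ℂ] (ℂ × (Fin r → ℂ)),
      HasStrictFDerivAt (fun p : ℂ × (Fin r → ℂ) => (p.1, qq r A B p))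
        (f' : (ℂ × (Fin r → ℂ)) →L[ℂ] (ℂ × (Fin r → ℂ))) (t, u) := by
  let D : MvPolynomial (Fin (2 * r + 2)) ℂ → ((Fin r → ℂ) →L[ℂ] ℂ) := fun p =>
    (∑ j : Fin r, eval (af r u) (pderiv (ix r j.succ) p) •
        ContinuousLinearMap.proj (R := ℂ) (φ := fun _ : Fin r => ℂ) j)
  let snd' := ContinuousLinearMap.snd ℂ ℂ (Fin r → ℂ)
  let fst' := ContinuousLinearMap.fst ℂ ℂ (Fin r → ℂ)
  let F : (ℂ × (Fin r → ℂ)) →L[ℂ] (ℂ × (Fin r → ℂ)) := fst'.prod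
    (ContinuousLinearMap.pi fun i => (D (A i).1).comp snd' +
      (t • (D (B i).1).comp snd' + eval (af r u) (B i).1 • fst'))
  have hF : HasStrictFDerivAt (fun p : ℂ × (Fin r → ℂ) => (p.1, qq r A B p)) F (t, u) := by
    refine HasStrictFDerivAt.prodMk hasStrictFDerivAt_fst ?_
    refine hasStrictFDerivAt_pi'.2 fun i => ?_
    have hA := (ev_deriv r (A i).1 u).comp (t, u) (hasStrictFDerivAt_snd (𝕜 := ℂ) (E := ℂ) (F := Fin r → ℂ))
    have hB := (ev_deriv r (B i).1 u).comp (t, u) (hasStrictFDerivAt_snd (𝕜 := ℂ) (E := ℂ) (F := Fin r → ℂ))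
    exact hA.add ((hasStrictFDerivAt_fst (𝕜 := ℂ) (E := ℂ) (F := Fin r → ℂ) (p := (t,u))).mul hB)
  have hinj : Function.Injective (F : (ℂ × (Fin r → ℂ)) →ₗ[ℂ] (ℂ × (Fin r → ℂ))) := by
    rw [← LinearMap.ker_eq_bot, LinearMap.ker_eq_bot']
    rintro ⟨dt, du⟩ h0
    have h1 : dt = 0 := congrArg Prod.fst h0
    subst h1
    have h2 : du = 0 := by
      refine good_det r _ hG (fun i => (mem_homogeneousSubmodule 2 _).1 ((A + t • B) i).2)
        (Fin.cons 1 u) (cons_ne r u) (fun i => ?_) du fun k => ?_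
      · exact (qq_eq r A B t u i).symm.trans (by rw [h]; rfl)
      · have := congrFun (congrArg Prod.snd h0) k
        simp only [F, D, snd', fst'] at this
        simp [Finset.mul_sum, ← Finset.sum_add_distrib, af] at this
        rw [← this]
        refine Finset.sum_congr rfl fun j _ => ?_
        simp
        ring
    rw [h2]; rfl
  refine ⟨(LinearEquiv.ofInjectiveEndo _ hinj).toContinuousLinearEquiv, ?_⟩
  refine hF.congr_fderiv ?_
  ext v <;> rfl
open Topology Filter in
lemma qq_bdd (r : ℕ) (A B : QV r) (t0 : ℂ) (hG : Good r (fun i => ((A + t0 • B) i).1)) :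
    ∃ R : ℝ, ∀ᶠ t in 𝓝 t0, ∀ u, qq r A B (t, u) = 0 → ‖u‖ ≤ R := by
  let H : (ℂ × ℂ) → (Fin (r + 1) → ℂ) → ℂ × (Fin r → ℂ) := fun p x =>
    (x 0 - p.2, fun i => eval (pt r x 0) (A i).1 + p.1 * eval (pt r x 0) (B i).1)
  have hpt : Continuous fun x : Fin (r + 1) → ℂ => pt r x (0 : Fin (r + 1) → ℂ) := by
    refine continuous_pi fun j => ?_
    rcases ix_or_iy r j with ⟨k, rfl⟩ | ⟨k, rfl⟩
    · simpa using continuous_apply k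
    · simpa using continuous_const
  have hev : ∀ p : MvPolynomial (Fin (2 * r + 2)) ℂ, Continuous fun x : Fin (r + 1) → ℂ =>
      eval (pt r x (0 : Fin (r + 1) → ℂ)) p := fun p => (MvPolynomial.continuous_eval p).comp hpt
  have hH : Continuous fun z : (ℂ × ℂ) × (Fin (r + 1) → ℂ) => H z.1 z.2 := by
    refine Continuous.prodMk (by fun_prop) (continuous_pi fun i => ?_)
    exact ((hev _).comp continuous_snd).add
      ((continuous_fst.comp continuous_fst).mul ((hev _).comp continuous_snd))
  have h0 : ∀ᶠ p in 𝓝 ((t0, 0) : ℂ × ℂ), ∀ x ∈ Metric.sphere (0 : Fin (r + 1) → ℂ) 1, H p x ≠ 0 := by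
    refine (isCompact_sphere _ _).eventually_forall_of_forall_eventually fun x hx => ?_
    refine (hH.continuousAt (x := ((t0, 0), x))).eventually_ne ?_
    intro hz
    have hx0 : x ≠ 0 := by
      rintro rfl
      simp at hx
    refine good_x0 r _ hG x hx0 (fun i => ?_) ?_
    · have := congrFun (congrArg Prod.snd hz) i
      simpa [H] using this
    · simpa [H] using congrArg Prod.fst hz
  rw [nhds_prod_eq, Filter.eventually_prod_iff] at h0
  obtain ⟨pa, hpa, pb, hpb, hab⟩ := h0
  obtain ⟨ε, hε, hb⟩ := Metric.eventually_nhds_iff.1 hpb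
  refine ⟨ε⁻¹, ?_⟩
  filter_upwards [hpa] with t ht u hu
  by_contra hR
  push Not at hR
  set Y : Fin (r + 1) → ℂ := Fin.cons 1 u with hY
  have hYu : ‖u‖ ≤ ‖Y‖ := by
    refine (pi_norm_le_iff_of_nonneg (norm_nonneg _)).2 fun i => ?_
    have := norm_le_pi_norm Y i.succ
    simpa [hY] using this
  have hYp : 0 < ‖Y‖ := lt_of_lt_of_le (lt_trans (inv_pos.2 hε) hR) hYu
  have hYε : ‖Y‖⁻¹ < ε := inv_lt_of_inv_lt₀ hε (lt_of_lt_of_le hR hYu)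
  let c : ℂ := ((‖Y‖⁻¹ : ℝ) : ℂ)
  have hc : ‖c‖ = ‖Y‖⁻¹ := by
    simp [c]
  refine hab ht (y := c) (hb (by rw [dist_zero_right, hc]; exact hYε)) (c • Y) ?_ ?_
  · rw [mem_sphere_zero_iff_norm, norm_smul, hc, inv_mul_cancel₀ hYp.ne']
  · have hq : ∀ i, eval (pt r Y 0) (A i).1 + t * eval (pt r Y 0) (B i).1 = 0 := fun i => congrFun hu i
    refine Prod.ext ?_ (funext fun i => ?_)
    · simp [H, hY]
    · have h1 := eval_smul_hom (A i).1 ((mem_homogeneousSubmodule 2 _).1 (A i).2) c (pt r Y 0)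
      have h2 := eval_smul_hom (B i).1 ((mem_homogeneousSubmodule 2 _).1 (B i).2) c (pt r Y 0)
      rw [pt_smul] at h1 h2
      simp only [H, h1, h2, Prod.snd_zero, Pi.zero_apply]
      linear_combination c ^ 2 * hq i

lemma qq_cont (r : ℕ) (A B : QV r) : Continuous (qq r A B) := by
  have haf : Continuous (af r) := continuous_iff_continuousAt.2 fun u => (af_deriv r u).continuousAt
  refine continuous_pi fun i => ?_
  have hev : ∀ p : MvPolynomial (Fin (2 * r + 2)) ℂ, Continuous fun z : ℂ × (Fin r → ℂ) =>
      eval (af r z.2) p := fun p => (MvPolynomial.continuous_eval p).comp (haf.comp continuous_snd)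
  exact (hev _).add (continuous_fst.mul (hev _))

lemma count00 (r : ℕ) : {u : Fin r → ℂ | ∀ i, eval (af r u) (Q00 r i).1 = 0}.ncard = 2 ^ r := by
  classical
  have : {u : Fin r → ℂ | ∀ i, eval (af r u) (Q00 r i).1 = 0} =
      ((Fintype.piFinset fun _ : Fin r => ({1, -1} : Finset ℂ)) : Set (Fin r → ℂ)) := by
    ext u
    have : ∀ i, eval (af r u) (Q00 r i).1 = 0 ↔ u i = 1 ∨ u i = -1 := by
      intro i
      change eval (af r u) (Qz r i) = 0 ↔ _
      simp [Qz, af, sub_eq_zero]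
    simp [this]
  rw [this, Set.ncard_coe_finset, Fintype.card_piFinset]
  simp [Finset.card_pair (show (1 : ℂ) ≠ -1 by norm_num)]

lemma count_aff (r : ℕ) (g : QV r → ℂ) (hg : IsPolynomialFun g) (hg0 : g (Q00 r) ≠ 0)
    (hgG : ∀ Q, g Q ≠ 0 → Good r (fun i => (Q i).1)) (Q : QV r) (hQ : g Q ≠ 0) :
    {u : Fin r → ℂ | ∀ i, eval (af r u) (Q i).1 = 0}.Finite ∧
    {u : Fin r → ℂ | ∀ i, eval (af r u) (Q i).1 = 0}.ncard = 2 ^ r := by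
  let B : QV r := Q - Q00 r
  have hfin := ipf_line hg (Q00 r) B hg0
  have hconn := (hfin.countable.isConnected_compl_of_one_lt_rank (E := ℂ) (by simp)).isPreconnected
  have key := topo_const (qq r (Q00 r) B) (qq_cont r _ _) _ hconn
    (fun t ht u hu => qq_deriv r _ _ t u hu (hgG _ ht))
    (fun t ht => qq_bdd r _ _ t (hgG _ ht)) 0 1 (by simpa using hg0) (by simpa [B] using hQ)
  have e : ∀ t, {u | qq r (Q00 r) B (t, u) = 0} =
      {u : Fin r → ℂ | ∀ i, eval (af r u) ((Q00 r + t • B) i).1 = 0} := by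
    intro t
    ext u
    simp only [Set.mem_ofPred_eq, funext_iff, ← qq_eq]
    rfl
  have e1 : Q00 r + (1 : ℂ) • B = Q := by simp [B]
  have e0 : Q00 r + (0 : ℂ) • B = Q00 r := by simp
  rw [e, e, e0, e1, count00] at key
  exact ⟨key.1, key.2.symm⟩

lemma count_proj (r : ℕ) (Q : QV r) (hG : Good r (fun i => (Q i).1)) :
    {p : Projectivization ℂ (Fin (2 * r + 2) → ℂ) |
            (∀ j : Fin (2 * r + 2), r + 1 ≤ (j : ℕ) → p.rep j = 0) ∧
            ∀ i, eval p.rep ((Q i : MvPolynomial (Fin (2 * r + 2)) ℂ)) = 0} =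
    (fun u => Projectivization.mk ℂ (af r u) (fun h => by
      simpa [af] using congrFun h (ix r 0))) ''
      {u : Fin r → ℂ | ∀ i, eval (af r u) (Q i).1 = 0} := by
  ext p
  constructor
  · rintro ⟨h1, h2⟩
    have hp : p.rep = pt r (fun j => p.rep (ix r j)) 0 := by
      conv_lhs => rw [← pt_self r p.rep]
      congr 1
      ext k
      exact h1 _ (by simp [iy])
    have hx : (fun j => p.rep (ix r j)) ≠ 0 := by
      intro h
      apply p.rep_nonzero
      rw [hp, h]
      ext j
      rcases ix_or_iy r j with ⟨k, rfl⟩ | ⟨k, rfl⟩ <;> simp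
    have h0 := good_x0 r _ hG _ hx (fun i => by rw [← hp]; exact h2 i)
    have haf : af r (fun i => (p.rep (ix r 0))⁻¹ * p.rep (ix r i.succ)) = (p.rep (ix r 0))⁻¹ • p.rep := by
      rw [hp, pt_smul, af]
      congr 1
      ext k
      refine Fin.cases ?_ (fun i => ?_) k
      · simp [h0]
      · simp
    refine ⟨fun i => (p.rep (ix r 0))⁻¹ * p.rep (ix r i.succ), fun i => ?_, ?_⟩
    · rw [haf, eval_smul_hom _ ((mem_homogeneousSubmodule 2 _).1 (Q i).2), h2, mul_zero]
    · conv_rhs => rw [← p.mk_rep]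
      exact (Projectivization.mk_eq_mk_iff' ℂ _ _ _ _).2 ⟨_, haf.symm⟩
  · rintro ⟨u, hu, rfl⟩
    obtain ⟨c, hc⟩ := Projectivization.exists_smul_eq_mk_rep ℂ (af r u) (fun h => by
      simpa [af] using congrFun h (ix r 0))
    have hc' : (c : ℂ) • af r u = _ := hc
    simp only [Set.mem_ofPred_eq]
    rw [← hc']
    refine ⟨fun j hj => ?_, fun i => ?_⟩
    · rcases ix_or_iy r j with ⟨k, rfl⟩ | ⟨k, rfl⟩
      · have := k.isLt
        simp [ix] at hj
        omega
      · simp [af]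
    · rw [eval_smul_hom _ ((mem_homogeneousSubmodule 2 _).1 (Q i).2), hu i, mul_zero]

lemma mk_inj (r : ℕ) : Function.Injective (fun u => Projectivization.mk ℂ (af r u) (fun h => by
      simpa [af] using congrFun h (ix r 0))) := by
  intro u v h
  obtain ⟨c, hc⟩ := (Projectivization.mk_eq_mk_iff' ℂ _ _ _ _).1 h
  have h0 := congrFun hc (ix r 0)
  simp [af] at h0
  subst h0
  ext i
  have := congrFun hc (ix r i.succ)
  simpa [af] using this.symm

/-- Let `Y_{2r} = {x_{r+1}² x₀ + x_{r+2} Q₁ + … + x_{2r+1} Q_r = 0} ⊆ ℙ^{2r+1}`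
with `Q₁,…,Q_r` homogeneous quadrics. Every point with `x_{r+1} = … = x_{2r+1} = 0` and
`Q₁ = … = Q_r = 0` is a singular point of `Y_{2r}` (all partials vanish); and for general
quadrics the converse holds and this singular locus is a finite set of exactly `2^r`
projective points. -/
theorem stmt15 (r : ℕ) (hr : 1 ≤ r) :
    (∀ Q : Fin r → MvPolynomial (Fin (2 * r + 2)) ℂ, (∀ i, (Q i).IsHomogeneous 2) →
      ∀ x : Fin (2 * r + 2) → ℂ,
        (∀ j : Fin (2 * r + 2), r + 1 ≤ (j : ℕ) → x j = 0) →
        (∀ i, eval x (Q i) = 0) →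
        ∀ j, eval x (pderiv j (cubicForm r Q)) = 0) ∧
    ∃ U : Set (Fin r → homogeneousSubmodule (Fin (2 * r + 2)) ℂ 2),
      IsZariskiOpen U ∧ U.Nonempty ∧
      ∀ Q ∈ U,
        (∀ x : Fin (2 * r + 2) → ℂ, x ≠ 0 →
          ((∀ j, eval x (pderiv j
              (cubicForm r (fun i => (Q i : MvPolynomial (Fin (2 * r + 2)) ℂ)))) = 0) ↔
            ((∀ j : Fin (2 * r + 2), r + 1 ≤ (j : ℕ) → x j = 0) ∧
              ∀ i, eval x ((Q i : MvPolynomial (Fin (2 * r + 2)) ℂ)) = 0))) ∧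
        ({p : Projectivization ℂ (Fin (2 * r + 2) → ℂ) |
            (∀ j : Fin (2 * r + 2), r + 1 ≤ (j : ℕ) → p.rep j = 0) ∧
            ∀ i, eval p.rep ((Q i : MvPolynomial (Fin (2 * r + 2)) ℂ)) = 0}).Finite ∧
        ({p : Projectivization ℂ (Fin (2 * r + 2) → ℂ) |
            (∀ j : Fin (2 * r + 2), r + 1 ≤ (j : ℕ) → p.rep j = 0) ∧
            ∀ i, eval p.rep ((Q i : MvPolynomial (Fin (2 * r + 2)) ℂ)) = 0}).ncard = 2 ^ r := by
  refine ⟨fun Q _ x hx hQ j => part_one r Q x hx hQ j, ?_⟩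
  obtain ⟨g, hg, hg0, hgG⟩ := good_open r (Q00 r) (Qz_good r)
  refine ⟨{Q | g Q ≠ 0}, ⟨{g}, by simpa using hg, by ext Q; simp⟩, ⟨Q00 r, hg0⟩, fun Q hQ => ?_⟩
  have hc := count_aff r g hg hg0 hgG Q hQ
  refine ⟨fun x _ => ⟨fun h => part_two r _ (hgG Q hQ) x h,
    fun h j => part_one r _ x h.1 h.2 j⟩, ?_⟩
  rw [count_proj r Q (hgG Q hQ)]
  exact ⟨hc.1.image _, by rw [Set.ncard_image_of_injective _ (mk_inj r), hc.2]⟩
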